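/- For every b ∈ ℝ^{m₁m₂} and every σ² > 0, the supremum of the augmented objective over η satisfies sup_{η ∈ (0,∞)^{m₁×m₂}} G(b, σ², η) = F(b, σ²). Moreover, if ‖b_{A_k,l}‖₁ > 0 for all k = 1,…,m₁ and l = 1,…,m₂, then this supremum is attained at η*_{kl} = τ^{−γ} ((1−γ)/γ)^γ c_{kl} ‖b_{A_k,l}‖₁^γ. -/

import Mathlib

/-!
Both penalties are sums over `(k, l)`, so everything reduces to the scalar problem of minimizing
`η ↦ c^(1/γ) η^(1-1/γ) N + τ η` over `η > 0`, where `N ≥ 0` is a group norm. Weighted AM-GM with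
weights `γ` and `1 - γ`, applied to `c^(1/γ) η^(1-1/γ) N / γ` and `τ η / (1-γ)`, bounds this below
by `λ c N^γ`, because the powers of `η` cancel (`term_lower`). For `N > 0` the bound is attained
at the stated `η*` (`term_attained`); for `N = 0` the expression is `τ η`, which tends to the bound
`0` as `η → 0⁺`. Hence the bound is an infimum in all cases (`term_approx`).
-/

open Finset Set Matrix

/-- Nested group ℓ¹-norm: `‖b_{A_k,l}‖₁ = ∑_{j=k}^{m₁} |b_{jl}|`. -/
noncomputable def groupNorm (m₁ m₂ : ℕ) (b : Fin m₁ × Fin m₂ → ℝ)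
    (k : Fin m₁) (l : Fin m₂) : ℝ :=
  ∑ j ∈ Finset.univ.filter (fun j : Fin m₁ => k ≤ j), |b (j, l)|

/-- Gaussian log-likelihood `ℓ(b,σ²) = -(n/2) log(2πσ²) - ‖y - Zb‖²/(2σ²)`. -/
noncomputable def loglik (n m₁ m₂ : ℕ) (y : Fin n → ℝ)
    (Z : Matrix (Fin n) (Fin m₁ × Fin m₂) ℝ) (b : Fin m₁ × Fin m₂ → ℝ) (σ2 : ℝ) : ℝ :=
  -((n : ℝ) / 2) * Real.log (2 * Real.pi * σ2)
    - (∑ i, (y i - Z.mulVec b i) ^ 2) / (2 * σ2)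

/-- Group-bridge objective `F(b,σ²)` with `λ = τ^(1-γ) γ^(-γ) (1-γ)^(γ-1)`. -/
noncomputable def Fobj (n m₁ m₂ : ℕ) (y : Fin n → ℝ)
    (Z : Matrix (Fin n) (Fin m₁ × Fin m₂) ℝ)
    (P : Matrix (Fin m₁ × Fin m₂) (Fin m₁ × Fin m₂) ℝ)
    (c : Fin m₁ → Fin m₂ → ℝ) (κ γ τ : ℝ)
    (b : Fin m₁ × Fin m₂ → ℝ) (σ2 : ℝ) : ℝ :=
  loglik n m₁ m₂ y Z b σ2 - (n : ℝ) * κ * (b ⬝ᵥ P.mulVec b)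
    - (n : ℝ) * (τ ^ (1 - γ) * γ ^ (-γ) * (1 - γ) ^ (γ - 1)) *
        ∑ l, ∑ k, c k l * (groupNorm m₁ m₂ b k l) ^ γ

/-- Augmented objective `G(b,σ²,η)`. -/
noncomputable def Gobj (n m₁ m₂ : ℕ) (y : Fin n → ℝ)
    (Z : Matrix (Fin n) (Fin m₁ × Fin m₂) ℝ)
    (P : Matrix (Fin m₁ × Fin m₂) (Fin m₁ × Fin m₂) ℝ)
    (c : Fin m₁ → Fin m₂ → ℝ) (κ γ τ : ℝ)
    (b : Fin m₁ × Fin m₂ → ℝ) (σ2 : ℝ) (η : Fin m₁ → Fin m₂ → ℝ) : ℝ :=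
  loglik n m₁ m₂ y Z b σ2 - (n : ℝ) * κ * (b ⬝ᵥ P.mulVec b)
    - (n : ℝ) * ∑ l, ∑ k,
        (c k l) ^ (1 / γ) * (η k l) ^ (1 - 1 / γ) * groupNorm m₁ m₂ b k l
    - (n : ℝ) * τ * ∑ l, ∑ k, η k l

/-- The scalar form of `G ≤ F`, by weighted AM-GM. -/
lemma term_lower {c γ τ N η : ℝ} (hc : 0 < c) (hγ0 : 0 < γ) (hγ1 : γ < 1) (hτ : 0 < τ)
    (hN : 0 ≤ N) (hη : 0 < η) :
    τ ^ (1 - γ) * γ ^ (-γ) * (1 - γ) ^ (γ - 1) * (c * N ^ γ)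
      ≤ c ^ (1 / γ) * η ^ (1 - 1 / γ) * N + τ * η := by
  have h1 : 0 < 1 - γ := by linarith
  have hx : 0 ≤ c ^ (1 / γ) * η ^ (1 - 1 / γ) * N := by positivity
  have key := Real.geom_mean_le_arith_mean2_weighted hγ0.le h1.le
    (div_nonneg hx hγ0.le) (div_nonneg (mul_pos hτ hη).le h1.le) (by ring)
  rw [mul_div_cancel₀ _ hγ0.ne', mul_div_cancel₀ _ h1.ne'] at key
  refine le_trans (le_of_eq ?_) key
  rw [Real.div_rpow hx hγ0.le, Real.div_rpow (by positivity) h1.le,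
    Real.mul_rpow (by positivity) hN, Real.mul_rpow (by positivity) (by positivity),
    Real.mul_rpow hτ.le hη.le, ← Real.rpow_mul hc.le, ← Real.rpow_mul hη.le,
    one_div_mul_cancel hγ0.ne', Real.rpow_one,
    show (1 - 1 / γ) * γ = -(1 - γ) by field_simp; ring,
    Real.rpow_neg hη.le, Real.rpow_neg hγ0.le,
    show γ - 1 = -(1 - γ) by ring, Real.rpow_neg h1.le]
  have := (Real.rpow_pos_of_pos hη (1 - γ)).ne'
  field_simp

lemma term_attained {c γ τ N : ℝ} (hc : 0 < c) (hγ0 : 0 < γ) (hγ1 : γ < 1) (hτ : 0 < τ)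
    (hN : 0 < N) :
    c ^ (1 / γ) * (τ ^ (-γ) * ((1 - γ) / γ) ^ γ * c * N ^ γ) ^ (1 - 1 / γ) * N
        + τ * (τ ^ (-γ) * ((1 - γ) / γ) ^ γ * c * N ^ γ)
      = τ ^ (1 - γ) * γ ^ (-γ) * (1 - γ) ^ (γ - 1) * (c * N ^ γ) := by
  have h1 : 0 < 1 - γ := by linarith
  have hcp : 0 < c ^ (1 / γ) := by positivity
  -- `η* = u ^ γ`, so that `η* ^ (1 - 1/γ) = u ^ γ / u`.
  obtain ⟨u, hu⟩ : ∃ u, u = τ⁻¹ * ((1 - γ) / γ) * c ^ (1 / γ) * N := ⟨_, rfl⟩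
  have hu0 : 0 < u := by rw [hu]; positivity
  have hη : τ ^ (-γ) * ((1 - γ) / γ) ^ γ * c * N ^ γ = u ^ γ := by
    rw [hu, Real.mul_rpow (by positivity) hN.le, Real.mul_rpow (by positivity) (by positivity),
      Real.mul_rpow (by positivity) (by positivity), ← Real.rpow_mul hc.le,
      one_div_mul_cancel hγ0.ne', Real.rpow_one, Real.inv_rpow hτ.le, Real.rpow_neg hτ.le]
  have hpow : (u ^ γ) ^ (1 - 1 / γ) = u ^ γ / u := by
    rw [← Real.rpow_mul hu0.le, show γ * (1 - 1 / γ) = γ - 1 by field_simp,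
      Real.rpow_sub_one hu0.ne']
  have hfrac : c ^ (1 / γ) * N = τ * γ / (1 - γ) * u := by
    rw [hu]; field_simp
  have hval : c ^ (1 / γ) * (u ^ γ / u) * N + τ * u ^ γ = τ / (1 - γ) * u ^ γ := by
    calc _ = c ^ (1 / γ) * N * (u ^ γ / u) + τ * u ^ γ := by ring
      _ = _ := by rw [hfrac]; field_simp; ring
  rw [hη, hpow, hval, ← hη, Real.div_rpow h1.le hγ0.le, Real.rpow_neg hτ.le, Real.rpow_neg hγ0.le,
    Real.rpow_sub_one h1.ne', Real.rpow_sub hτ, Real.rpow_one]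
  field_simp

lemma term_approx {c γ τ N ε : ℝ} (hc : 0 < c) (hγ0 : 0 < γ) (hγ1 : γ < 1) (hτ : 0 < τ)
    (hN : 0 ≤ N) (hε : 0 < ε) :
    ∃ η, 0 < η ∧ c ^ (1 / γ) * η ^ (1 - 1 / γ) * N + τ * η
      ≤ τ ^ (1 - γ) * γ ^ (-γ) * (1 - γ) ^ (γ - 1) * (c * N ^ γ) + ε := by
  have h1 : 0 < 1 - γ := by linarith
  rcases hN.eq_or_lt with rfl | hN
  · refine ⟨ε / τ, by positivity, ?_⟩
    rw [Real.zero_rpow hγ0.ne', mul_div_cancel₀ _ hτ.ne']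
    simp
  · exact ⟨_, by positivity, (term_attained hc hγ0 hγ1 hτ hN).le.trans (by linarith)⟩

lemma groupNorm_nonneg (m₁ m₂ : ℕ) (b : Fin m₁ × Fin m₂ → ℝ) (k : Fin m₁) (l : Fin m₂) :
    0 ≤ groupNorm m₁ m₂ b k l :=
  Finset.sum_nonneg fun _ _ => abs_nonneg _

/-- `F - G` as `n` times a sum of scalar discrepancies. -/
lemma Gobj_eq_Fobj_sub (n m₁ m₂ : ℕ) (y : Fin n → ℝ) (Z : Matrix (Fin n) (Fin m₁ × Fin m₂) ℝ)
    (P : Matrix (Fin m₁ × Fin m₂) (Fin m₁ × Fin m₂) ℝ)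
    (c : Fin m₁ → Fin m₂ → ℝ) (κ γ τ : ℝ) (b : Fin m₁ × Fin m₂ → ℝ) (σ2 : ℝ)
    (η : Fin m₁ → Fin m₂ → ℝ) :
    Gobj n m₁ m₂ y Z P c κ γ τ b σ2 η = Fobj n m₁ m₂ y Z P c κ γ τ b σ2 - (n : ℝ) * ∑ l, ∑ k,
      ((c k l ^ (1 / γ) * η k l ^ (1 - 1 / γ) * groupNorm m₁ m₂ b k l + τ * η k l)
        - τ ^ (1 - γ) * γ ^ (-γ) * (1 - γ) ^ (γ - 1) * (c k l * groupNorm m₁ m₂ b k l ^ γ)) := by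
  simp only [Gobj, Fobj, Finset.sum_sub_distrib, Finset.sum_add_distrib, ← Finset.mul_sum]
  ring

/-- For every `b` and `σ² > 0`, `sup_{η > 0} G(b,σ²,η) = F(b,σ²)`; moreover, if all
nested group norms of `b` are positive, the supremum is attained at
`η*_{kl} = τ^(-γ) ((1-γ)/γ)^γ c_{kl} ‖b_{A_k,l}‖₁^γ`. -/
theorem sup_Gobj_eq_Fobj (n m₁ m₂ : ℕ) (hn : 1 ≤ n) (hm₁ : 1 ≤ m₁) (hm₂ : 1 ≤ m₂)
    (y : Fin n → ℝ) (Z : Matrix (Fin n) (Fin m₁ × Fin m₂) ℝ)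
    (P : Matrix (Fin m₁ × Fin m₂) (Fin m₁ × Fin m₂) ℝ) (hP : P.PosSemidef)
    (c : Fin m₁ → Fin m₂ → ℝ) (hc : ∀ k l, 0 < c k l)
    (κ γ τ : ℝ) (hκ : 0 < κ) (hγ0 : 0 < γ) (hγ1 : γ < 1) (hτ : 0 < τ)
    (b : Fin m₁ × Fin m₂ → ℝ) (σ2 : ℝ) (hσ2 : 0 < σ2) :
    sSup ((fun η => Gobj n m₁ m₂ y Z P c κ γ τ b σ2 η) ''
        {η : Fin m₁ → Fin m₂ → ℝ | ∀ k l, 0 < η k l})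
      = Fobj n m₁ m₂ y Z P c κ γ τ b σ2 ∧
    ((∀ k l, 0 < groupNorm m₁ m₂ b k l) →
      Gobj n m₁ m₂ y Z P c κ γ τ b σ2
          (fun k l => τ ^ (-γ) * ((1 - γ) / γ) ^ γ * c k l * (groupNorm m₁ m₂ b k l) ^ γ)
        = Fobj n m₁ m₂ y Z P c κ γ τ b σ2) := by
  refine ⟨csSup_eq_of_forall_le_of_forall_lt_exists_gt ?_ ?_ ?_, ?_⟩
  · exact Set.Nonempty.image _ ⟨fun _ _ => 1, fun _ _ => one_pos⟩
  · rintro _ ⟨η, hη, rfl⟩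
    simp only [Gobj_eq_Fobj_sub]
    have : 0 ≤ ∑ l, ∑ k,
        ((c k l ^ (1 / γ) * η k l ^ (1 - 1 / γ) * groupNorm m₁ m₂ b k l + τ * η k l)
        - τ ^ (1 - γ) * γ ^ (-γ) * (1 - γ) ^ (γ - 1) * (c k l * groupNorm m₁ m₂ b k l ^ γ)) :=
      Finset.sum_nonneg fun l _ => Finset.sum_nonneg fun k _ => sub_nonneg.2
        (term_lower (hc k l) hγ0 hγ1 hτ (groupNorm_nonneg ..) (hη k l))
    have := mul_nonneg (Nat.cast_nonneg (α := ℝ) n) this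
    linarith
  · intro w hw
    have hn' : (0 : ℝ) < n := by exact_mod_cast hn
    have hm₁' : (0 : ℝ) < m₁ := by exact_mod_cast hm₁
    have hm₂' : (0 : ℝ) < m₂ := by exact_mod_cast hm₂
    -- Half of the available gap is shared equally among the `m₁ m₂` terms, each weighted by `n`.
    obtain ⟨ε, hε⟩ : ∃ ε, ε = (Fobj n m₁ m₂ y Z P c κ γ τ b σ2 - w) / (2 * n * m₁ * m₂) := ⟨_, rfl⟩
    have hd : 0 < Fobj n m₁ m₂ y Z P c κ γ τ b σ2 - w := sub_pos.2 hw
    have hε0 : 0 < ε := by rw [hε]; positivity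
    choose η hη0 hη using fun k l =>
      term_approx (hc k l) hγ0 hγ1 hτ (groupNorm_nonneg m₁ m₂ b k l) hε0
    refine ⟨_, ⟨η, hη0, rfl⟩, ?_⟩
    simp only [Gobj_eq_Fobj_sub]
    have hsum : ∑ l, ∑ k,
        ((c k l ^ (1 / γ) * η k l ^ (1 - 1 / γ) * groupNorm m₁ m₂ b k l + τ * η k l)
        - τ ^ (1 - γ) * γ ^ (-γ) * (1 - γ) ^ (γ - 1) * (c k l * groupNorm m₁ m₂ b k l ^ γ))
        ≤ ∑ _l : Fin m₂, ∑ _k : Fin m₁, ε :=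
      Finset.sum_le_sum fun l _ => Finset.sum_le_sum fun k _ => sub_le_iff_le_add'.2 (hη k l)
    have hmul := mul_le_mul_of_nonneg_left hsum hn'.le
    have htot : (n : ℝ) * ∑ _l : Fin m₂, ∑ _k : Fin m₁, ε
        = (Fobj n m₁ m₂ y Z P c κ γ τ b σ2 - w) / 2 := by
      simp only [Finset.sum_const, Finset.card_univ, Fintype.card_fin, nsmul_eq_mul]
      rw [hε]; field_simp
    linarith
  · intro hN
    rw [Gobj_eq_Fobj_sub, Finset.sum_eq_zero, mul_zero, sub_zero]
    exact fun l _ => Finset.sum_eq_zero fun k _ =>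
      sub_eq_zero.2 (term_attained (hc k l) hγ0 hγ1 hτ (hN k l))
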